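/- Gaussian mean width of the intersection of a total-variation ball with a Euclidean ball (Lemma 4). There is an absolute constant c > 0 such that for every integer p ≥ 1 and all reals ρ ≥ r > 0, E[ sup { ⟨G, t⟩ : t ∈ ℝ^p, ‖t‖_TV ≤ ρ, ‖t‖₂ ≤ r } ] ≤ c·√(rρ)·p^{1/4}, where G is a standard Gaussian random vector in ℝ^p (i.i.d. N(0,1) coordinates). -/

import Mathlib

open MeasureTheory

/-- The discrete difference operator `D`: `(Dt)₁ = t₁` and `(Dt)ᵢ = tᵢ − tᵢ₋₁` for `i ≥ 2`. -/
def discreteDiff {p : ℕ} (t : Fin p → ℝ) : Fin p → ℝ :=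
  fun i =>
    if _h : (i : ℕ) = 0 then t i
    else t i - t ⟨(i : ℕ) - 1, lt_of_le_of_lt (Nat.sub_le _ _) i.isLt⟩

/-- The total-variation norm `‖t‖_TV = |t₁| + ∑ |tᵢ₊₁ − tᵢ|`. -/
def tvNorm {p : ℕ} (t : Fin p → ℝ) : ℝ := ∑ i, |discreteDiff t i|

/-- Euclidean norm on `Fin p → ℝ`. -/
noncomputable def euclNorm {p : ℕ} (t : Fin p → ℝ) : ℝ :=
  Real.sqrt (∑ i, t i ^ 2)

/-- Euclidean inner product on `Fin p → ℝ`. -/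
def dotProd {p : ℕ} (z t : Fin p → ℝ) : ℝ := ∑ i, z i * t i

open Finset ProbabilityTheory

/-- Normalised sums of consecutive pairs: one step of the Haar transform, low-pass part. -/
noncomputable def haarLow (f : ℕ → ℝ) (b : ℕ) : ℝ := (f (2 * b) + f (2 * b + 1)) / √2

/-- Normalised differences of consecutive pairs: one step of the Haar transform, high-pass part. -/
noncomputable def haarHigh (f : ℕ → ℝ) (b : ℕ) : ℝ := (f (2 * b) - f (2 * b + 1)) / √2

lemma sum_range_two_mul_eq (u : ℕ → ℝ) (n : ℕ) :
    ∑ i ∈ range (2 * n), u i = ∑ b ∈ range n, (u (2 * b) + u (2 * b + 1)) := by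
  induction n with
  | zero => simp
  | succ n ih =>
    rw [sum_range_succ, ← ih, show 2 * (n + 1) = 2 * n + 1 + 1 by ring, sum_range_succ,
      sum_range_succ]
    ring

lemma sum_mul_eq_haar (t g : ℕ → ℝ) (n : ℕ) :
    ∑ i ∈ range (2 * n), t i * g i =
      ∑ b ∈ range n, haarLow t b * haarLow g b + ∑ b ∈ range n, haarHigh t b * haarHigh g b := by
  rw [sum_range_two_mul_eq, ← sum_add_distrib]
  refine sum_congr rfl fun b _ => ?_
  have h : √2 ^ 2 = (2 : ℝ) := Real.sq_sqrt (by norm_num)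
  simp only [haarLow, haarHigh]
  field_simp
  rw [h]
  ring

lemma sum_mul_eq_haar_iterate (t g : ℕ → ℝ) (J m : ℕ) :
    ∑ i ∈ range (2 ^ J * m), t i * g i =
      ∑ b ∈ range m, haarLow^[J] t b * haarLow^[J] g b +
        ∑ j ∈ range J, ∑ b ∈ range (2 ^ (J - 1 - j) * m),
          haarHigh (haarLow^[j] t) b * haarHigh (haarLow^[j] g) b := by
  induction J generalizing t g with
  | zero => simp
  | succ J ih =>
    rw [pow_succ', mul_assoc, sum_mul_eq_haar, ih, sum_range_succ', add_assoc]
    simp only [Function.iterate_succ_apply, Function.iterate_zero, id_eq]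
    congr 1
    congr 1
    refine sum_congr rfl fun j _ => ?_
    rw [show J + 1 - 1 - (j + 1) = J - 1 - j by omega]

lemma sum_sq_haarLow_add (t : ℕ → ℝ) (n : ℕ) :
    ∑ b ∈ range n, haarLow t b ^ 2 + ∑ b ∈ range n, haarHigh t b ^ 2 =
      ∑ i ∈ range (2 * n), t i ^ 2 := by
  simp only [pow_two]
  rw [sum_mul_eq_haar]

lemma sum_sq_haarLow_iterate_le {t : ℕ → ℝ} {R : ℝ} (h : ∀ n, ∑ i ∈ range n, t i ^ 2 ≤ R)
    (j n : ℕ) : ∑ i ∈ range n, haarLow^[j] t i ^ 2 ≤ R := by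
  induction j generalizing n with
  | zero => exact h n
  | succ j ih =>
    rw [Function.iterate_succ_apply']
    have h1 := sum_sq_haarLow_add (haarLow^[j] t) n
    have h2 : 0 ≤ ∑ b ∈ range n, haarHigh (haarLow^[j] t) b ^ 2 :=
      sum_nonneg fun _ _ => sq_nonneg _
    linarith [ih (2 * n)]

lemma sum_sq_haarHigh_iterate_le {t : ℕ → ℝ} {R : ℝ} (h : ∀ n, ∑ i ∈ range n, t i ^ 2 ≤ R)
    (j n : ℕ) : ∑ i ∈ range n, haarHigh (haarLow^[j] t) i ^ 2 ≤ R := by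
  have h1 := sum_sq_haarLow_add (haarLow^[j] t) n
  have h2 : 0 ≤ ∑ b ∈ range n, haarLow (haarLow^[j] t) b ^ 2 :=
    sum_nonneg fun _ _ => sq_nonneg _
  linarith [sum_sq_haarLow_iterate_le h j (2 * n)]

lemma sum_abs_sub_haarLow_le {t : ℕ → ℝ} {A : ℝ}
    (h : ∀ n, ∑ i ∈ range n, |t (i + 1) - t i| ≤ A) (n : ℕ) :
    ∑ i ∈ range n, |haarLow t (i + 1) - haarLow t i| ≤ √2 * A := by
  have hs : (0 : ℝ) < √2 := by positivity
  have h2 : √2 * √2 = (2 : ℝ) := Real.mul_self_sqrt (by norm_num)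
  have key : ∀ i, |haarLow t (i + 1) - haarLow t i| ≤
      ((|t (2 * i + 1) - t (2 * i)| + |t (2 * i + 1 + 1) - t (2 * i + 1)|) +
        (|t (2 * i + 1 + 1) - t (2 * i + 1)| + |t (2 * i + 1 + 1 + 1) - t (2 * i + 1 + 1)|)) /
        √2 := by
    intro i
    rw [haarLow, haarLow, ← sub_div, abs_div, abs_of_pos hs]
    gcongr
    rw [show 2 * (i + 1) = 2 * i + 1 + 1 by ring]
    rw [show t (2 * i + 1 + 1) + t (2 * i + 1 + 1 + 1) - (t (2 * i) + t (2 * i + 1)) =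
      ((t (2 * i + 1) - t (2 * i)) + (t (2 * i + 1 + 1) - t (2 * i + 1))) +
        ((t (2 * i + 1 + 1) - t (2 * i + 1)) +
          (t (2 * i + 1 + 1 + 1) - t (2 * i + 1 + 1))) by ring]
    exact (abs_add_le _ _).trans (add_le_add (abs_add_le _ _) (abs_add_le _ _))
  refine (sum_le_sum fun i _ => key i).trans ?_
  rw [← sum_div, sum_add_distrib, div_le_iff₀ hs]
  have e1 := sum_range_two_mul_eq (fun i => |t (i + 1) - t i|) n
  have e2 := sum_range_two_mul_eq (fun i => |t (i + 1 + 1) - t (i + 1)|) n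
  have e3 := sum_range_succ' (fun i => |t (i + 1) - t i|) (2 * n)
  rw [← e1, ← e2]
  have := h (2 * n)
  have := h (2 * n + 1)
  have := abs_nonneg (t (0 + 1) - t 0)
  rw [mul_right_comm, h2]
  linarith

lemma sum_abs_sub_haarLow_iterate_le {t : ℕ → ℝ} {A : ℝ}
    (h : ∀ n, ∑ i ∈ range n, |t (i + 1) - t i| ≤ A) (j n : ℕ) :
    ∑ i ∈ range n, |haarLow^[j] t (i + 1) - haarLow^[j] t i| ≤ √2 ^ j * A := by
  induction j generalizing n with
  | zero => simpa using h n
  | succ j ih =>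
    rw [Function.iterate_succ_apply', pow_succ', mul_assoc]
    exact sum_abs_sub_haarLow_le ih n

lemma sum_abs_haarHigh_iterate_le {t : ℕ → ℝ} {A : ℝ}
    (h : ∀ n, ∑ i ∈ range n, |t (i + 1) - t i| ≤ A) (j n : ℕ) :
    ∑ i ∈ range n, |haarHigh (haarLow^[j] t) i| ≤ √2 ^ j * A := by
  refine le_trans ?_ (sum_abs_sub_haarLow_iterate_le h j (2 * n))
  rw [sum_range_two_mul_eq]
  refine sum_le_sum fun b _ => ?_
  have hs : (1 : ℝ) ≤ √2 := Real.one_le_sqrt.mpr (by norm_num)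
  rw [haarHigh, abs_div, abs_of_pos (by positivity : (0 : ℝ) < √2), abs_sub_comm]
  exact (div_le_self (abs_nonneg _) hs).trans (le_add_of_nonneg_right (abs_nonneg _))

lemma haarLow_iterate_eq_sum (f : ℕ → ℝ) (j b : ℕ) :
    haarLow^[j] f b = ∑ i ∈ Ico (b * 2 ^ j) ((b + 1) * 2 ^ j), (√2)⁻¹ ^ j * f i := by
  induction j generalizing b with
  | zero => simp
  | succ j ih =>
    rw [Function.iterate_succ_apply', haarLow, ih, ih,
      sum_Ico_consecutive _ (Nat.mul_le_mul_right _ (by omega))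
        (Nat.mul_le_mul_right _ (by omega)), div_eq_inv_mul, mul_sum]
    rw [show b * 2 ^ (j + 1) = 2 * b * 2 ^ j by ring,
      show (b + 1) * 2 ^ (j + 1) = (2 * b + 1 + 1) * 2 ^ j by ring]
    exact sum_congr rfl fun i _ => by ring

lemma haarHigh_iterate_eq_sum (f : ℕ → ℝ) (j b : ℕ) :
    haarHigh (haarLow^[j] f) b =
      ∑ i ∈ Ico (b * 2 ^ (j + 1)) ((b + 1) * 2 ^ (j + 1)),
        (if i < (2 * b + 1) * 2 ^ j then (√2)⁻¹ ^ (j + 1) else -(√2)⁻¹ ^ (j + 1)) * f i := by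
  rw [show b * 2 ^ (j + 1) = 2 * b * 2 ^ j by ring,
    show (b + 1) * 2 ^ (j + 1) = (2 * b + 1 + 1) * 2 ^ j by ring,
    ← sum_Ico_consecutive _ (Nat.mul_le_mul_right (2 ^ j) (by omega : 2 * b ≤ 2 * b + 1))
      (Nat.mul_le_mul_right (2 ^ j) (by omega : 2 * b + 1 ≤ 2 * b + 1 + 1)),
    haarHigh, haarLow_iterate_eq_sum, haarLow_iterate_eq_sum, div_eq_inv_mul, mul_sub, mul_sum,
    mul_sum, sub_eq_add_neg, ← sum_neg_distrib]
  congr 1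
  · refine sum_congr rfl fun i hi => ?_
    rw [if_pos (mem_Ico.mp hi).2]
    ring
  · refine sum_congr rfl fun i hi => ?_
    rw [if_neg (not_lt.mpr (mem_Ico.mp hi).1)]
    ring

/-- Extension of a vector by zero to a sequence. -/
noncomputable def zeroExtend {p : ℕ} (t : Fin p → ℝ) (i : ℕ) : ℝ :=
  if h : i < p then t ⟨i, h⟩ else 0

lemma zeroExtend_val {p : ℕ} (t : Fin p → ℝ) (i : Fin p) : zeroExtend t i = t i := by
  simp [zeroExtend]

lemma zeroExtend_of_le {p : ℕ} (t : Fin p → ℝ) {i : ℕ} (h : p ≤ i) : zeroExtend t i = 0 := by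
  simp [zeroExtend, h]

lemma sum_range_zeroExtend {p n : ℕ} (h : p ≤ n) (u : ℕ → ℝ) (hu : ∀ i, p ≤ i → u i = 0) :
    ∑ i ∈ range n, u i = ∑ i : Fin p, u i := by
  rw [← Finset.sum_range]
  symm
  refine sum_subset (range_subset_range.mpr h) fun i _ hi => hu i ?_
  simpa using hi

lemma sum_range_zeroExtend_le {p : ℕ} (n : ℕ) (u : ℕ → ℝ) (hu : ∀ i, p ≤ i → u i = 0)
    (h0 : ∀ i, 0 ≤ u i) : ∑ i ∈ range n, u i ≤ ∑ i : Fin p, u i := by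
  rw [← sum_range_zeroExtend (Nat.le_add_left p n) u hu]
  exact sum_le_sum_of_subset_of_nonneg (range_subset_range.mpr (Nat.le_add_right _ _))
    fun i _ _ => h0 i

lemma sum_sq_zeroExtend_le {p : ℕ} {t : Fin p → ℝ} {r : ℝ} (hr : 0 ≤ r) (ht : euclNorm t ≤ r)
    (n : ℕ) : ∑ i ∈ range n, zeroExtend t i ^ 2 ≤ r ^ 2 := by
  refine (sum_range_zeroExtend_le (p := p) n (fun i => zeroExtend t i ^ 2)
    (fun i hi => by simp [zeroExtend_of_le t hi]) fun i => sq_nonneg _).trans ?_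
  simp only [zeroExtend_val]
  exact (Real.sqrt_le_left hr).mp ht

lemma sum_abs_sub_zeroExtend_le {p : ℕ} (t : Fin p → ℝ) (n : ℕ) :
    ∑ i ∈ range n, |zeroExtend t (i + 1) - zeroExtend t i| ≤ 2 * tvNorm t := by
  have key : ∑ i ∈ range n, |zeroExtend t (i + 1) - zeroExtend t i| + |zeroExtend t n| ≤
      2 * ∑ i ∈ range (n + 1), |zeroExtend (discreteDiff t) i| := by
    induction n with
    | zero =>
      have : zeroExtend (discreteDiff t) 0 = zeroExtend t 0 := by
        simp [zeroExtend, discreteDiff]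
      simp only [range_zero, sum_empty, zero_add, sum_range_one, this]
      linarith [abs_nonneg (zeroExtend t 0)]
    | succ n ih =>
      rw [sum_range_succ, sum_range_succ _ (n + 1)]
      rcases lt_or_ge (n + 1) p with h | h
      · have : zeroExtend (discreteDiff t) (n + 1) =
            zeroExtend t (n + 1) - zeroExtend t n := by
          simp [zeroExtend, discreteDiff, h, (Nat.lt_succ_self n).trans h]
        rw [this]
        have := abs_sub_abs_le_abs_sub (zeroExtend t (n + 1)) (zeroExtend t n)
        linarith
      · rw [zeroExtend_of_le t h, zeroExtend_of_le _ h]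
        simp only [zero_sub, abs_neg, abs_zero]
        linarith
  have h2 := sum_range_zeroExtend_le (p := p) (n + 1) (fun i => |zeroExtend (discreteDiff t) i|)
    (fun i hi => by simp [zeroExtend_of_le _ hi]) fun i => abs_nonneg _
  simp only [zeroExtend_val] at h2
  rw [tvNorm]
  linarith [abs_nonneg (zeroExtend t n)]

lemma exp_half_le_two : Real.exp (1 / 2) ≤ 2 := by
  have h : Real.exp (1 / 2) ^ 2 = Real.exp 1 := by
    rw [← Real.exp_nat_mul]
    norm_num
  nlinarith [Real.exp_one_lt_d9, Real.exp_pos (1 / 2)]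

lemma integrable_exp_linear_gaussian {p : ℕ} (a : Fin p → ℝ) :
    Integrable (fun g : Fin p → ℝ => Real.exp (∑ k, a k * g k))
      (Measure.pi fun _ : Fin p => gaussianReal 0 1) := by
  simp only [Real.exp_sum]
  exact Integrable.fintype_prod (f := fun k x => Real.exp (a k * x)) fun k =>
    integrable_exp_mul_gaussianReal (a k)

lemma integral_exp_linear_gaussian {p : ℕ} (a : Fin p → ℝ) :
    ∫ g : Fin p → ℝ, Real.exp (∑ k, a k * g k)
      ∂(Measure.pi fun _ : Fin p => gaussianReal 0 1) = Real.exp ((∑ k, a k ^ 2) / 2) := by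
  simp only [Real.exp_sum]
  rw [integral_fintype_prod_eq_prod (f := fun k x => Real.exp (a k * x)), sum_div, Real.exp_sum]
  refine prod_congr rfl fun k _ => ?_
  have := mgf_gaussianReal (p := gaussianReal 0 1) (X := id) (μ := 0) (v := 1) (by simp) (a k)
  simpa [mgf] using this

/-- A random variable whose exponential moments at `±1` are at most `2`. -/
def ExpMomentsLeTwo {Ω : Type*} [MeasurableSpace Ω] (μ : Measure Ω) (X : Ω → ℝ) : Prop :=
  Integrable (fun ω => Real.exp (X ω) + Real.exp (-X ω)) μ ∧
    ∫ ω, (Real.exp (X ω) + Real.exp (-X ω)) ∂μ ≤ 4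

lemma expMomentsLeTwo_sum_zeroExtend {p : ℕ} (S : Finset ℕ) (c : ℕ → ℝ)
    (hc : ∑ i ∈ S, c i ^ 2 ≤ 1) :
    ExpMomentsLeTwo (Measure.pi fun _ : Fin p => gaussianReal 0 1)
      (fun g => ∑ i ∈ S, c i * zeroExtend g i) := by
  set a : Fin p → ℝ := fun k => if (k : ℕ) ∈ S then c k else 0 with ha
  have hform : ∀ g : Fin p → ℝ, ∑ i ∈ S, c i * zeroExtend g i = ∑ k, a k * g k := by
    intro g
    have h1 := Finset.sum_range (n := p) fun i => if i ∈ S then c i * zeroExtend g i else 0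
    have h2 : ∑ i ∈ S, c i * zeroExtend g i =
        ∑ i ∈ range p, if i ∈ S then c i * zeroExtend g i else 0 := by
      rw [← sum_filter]
      symm
      refine sum_subset (fun i hi => (mem_filter.mp hi).2) fun i hi hi' => ?_
      rw [zeroExtend_of_le, mul_zero]
      by_contra! h
      exact hi' (mem_filter.mpr ⟨mem_range.mpr h, hi⟩)
    rw [h2, h1]
    refine sum_congr rfl fun k _ => ?_
    simp [ha, zeroExtend_val, ite_mul]
  have hsq : ∑ k, a k ^ 2 ≤ 1 := by
    have h1 := Finset.sum_range (n := p) fun i => if i ∈ S then c i ^ 2 else 0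
    have h2 : ∑ k, a k ^ 2 = ∑ k : Fin p, if (k : ℕ) ∈ S then c k ^ 2 else 0 :=
      sum_congr rfl fun k _ => by simp [ha, ite_pow]
    rw [h2, ← h1, ← sum_filter]
    refine le_trans (sum_le_sum_of_subset_of_nonneg (fun i hi => (mem_filter.mp hi).2)
      fun i _ _ => sq_nonneg _) hc
  have hneg : ∀ g : Fin p → ℝ, -∑ k, a k * g k = ∑ k, (-a) k * g k := by
    intro g
    simp [sum_neg_distrib]
  have i1 := integrable_exp_linear_gaussian a
  have i2 := integrable_exp_linear_gaussian (-a)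
  simp only [ExpMomentsLeTwo, hform, hneg]
  refine ⟨i1.add i2, ?_⟩
  rw [integral_add i1 i2, integral_exp_linear_gaussian, integral_exp_linear_gaussian]
  simp only [Pi.neg_apply, neg_sq]
  have : Real.exp ((∑ k, a k ^ 2) / 2) ≤ Real.exp (1 / 2) := Real.exp_le_exp.mpr (by linarith)
  linarith [exp_half_le_two]

lemma inv_sqrt_two_pow_sq (j : ℕ) : ((√2 : ℝ)⁻¹ ^ j) ^ 2 = (2 ^ j)⁻¹ := by
  rw [← pow_mul, mul_comm, pow_mul, inv_pow, Real.sq_sqrt (by norm_num), inv_pow]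

lemma sum_Ico_dyadic_const (b j : ℕ) :
    ∑ _i ∈ Ico (b * 2 ^ j) ((b + 1) * 2 ^ j), ((2 : ℝ) ^ j)⁻¹ = 1 := by
  rw [sum_const, Nat.card_Ico, show (b + 1) * 2 ^ j - b * 2 ^ j = 2 ^ j by
    rw [add_mul, one_mul, Nat.add_sub_cancel_left], nsmul_eq_mul]
  push_cast
  exact mul_inv_cancel₀ (by positivity)

lemma expMomentsLeTwo_haarLow {p : ℕ} (j b : ℕ) :
    ExpMomentsLeTwo (Measure.pi fun _ : Fin p => gaussianReal 0 1)
      (fun g => haarLow^[j] (zeroExtend g) b) := by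
  simp only [haarLow_iterate_eq_sum]
  refine expMomentsLeTwo_sum_zeroExtend _ (fun _ => (√2)⁻¹ ^ j) ?_
  simp only [inv_sqrt_two_pow_sq]
  exact (sum_Ico_dyadic_const b j).le

lemma expMomentsLeTwo_haarHigh {p : ℕ} (j b : ℕ) :
    ExpMomentsLeTwo (Measure.pi fun _ : Fin p => gaussianReal 0 1)
      (fun g => haarHigh (haarLow^[j] (zeroExtend g)) b) := by
  simp only [haarHigh_iterate_eq_sum]
  refine expMomentsLeTwo_sum_zeroExtend _
    (fun i => if i < (2 * b + 1) * 2 ^ j then (√2)⁻¹ ^ (j + 1) else -(√2)⁻¹ ^ (j + 1)) ?_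
  simp only [ite_pow, neg_sq, inv_sqrt_two_pow_sq, ite_self]
  exact (sum_Ico_dyadic_const b (j + 1)).le

lemma mul_le_threshold (x X : ℝ) {lam al : ℝ} (hal : 0 < al) :
    x * X ≤ lam * |x| + al / 2 * x ^ 2 +
      Real.exp (-lam) / al * (Real.exp X + Real.exp (-X)) := by
  have h1 : x * X ≤ |x| * |X| := by
    rw [← abs_mul]
    exact le_abs_self _
  have hx := abs_nonneg x
  have h4 : 0 ≤ Real.exp (-lam) / al * (Real.exp X + Real.exp (-X)) := by positivity
  rcases le_total |X| lam with h | h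
  · nlinarith [mul_le_mul_of_nonneg_left h hx, mul_nonneg hal.le (sq_nonneg x)]
  · have h2 : Real.exp (|X| - lam) ≤ Real.exp (-lam) * (Real.exp X + Real.exp (-X)) := by
      rw [sub_eq_add_neg, Real.exp_add, mul_comm]
      gcongr
      rcases abs_choice X with h | h <;> rw [h] <;> linarith [Real.exp_pos X, Real.exp_pos (-X)]
    have h3 := Real.quadratic_le_exp_of_nonneg (sub_nonneg.mpr h)
    have h5 : (|X| - lam) ^ 2 / 2 ≤ Real.exp (-lam) * (Real.exp X + Real.exp (-X)) := by
      linarith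
    have h6 : (|X| - lam) ^ 2 / 2 / al ≤
        Real.exp (-lam) / al * (Real.exp X + Real.exp (-X)) := by
      rw [div_mul_eq_mul_div]
      gcongr
    have h7 : |x| * (|X| - lam) ≤ al / 2 * x ^ 2 + (|X| - lam) ^ 2 / 2 / al := by
      have : al / 2 * x ^ 2 + (|X| - lam) ^ 2 / 2 / al - |x| * (|X| - lam) =
          (al * |x| - (|X| - lam)) ^ 2 / (2 * al) := by
        rw [← sq_abs x]
        field_simp
        ring
      have : 0 ≤ (al * |x| - (|X| - lam)) ^ 2 / (2 * al) := by positivity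
      linarith
    linarith

/-- Expected supremum of a linear form over the intersection of an `ℓ¹` and an `ℓ²` ball. -/
lemma exists_integrable_bound_l1_inter_l2 {Ω : Type*} [MeasurableSpace Ω] {μ : Measure Ω}
    [IsProbabilityMeasure μ] (X : ℕ → Ω → ℝ) (hX : ∀ b, ExpMomentsLeTwo μ (X b)) {n : ℕ}
    (hn : 0 < n) {r : ℝ} (hr : 0 < r) (lam A : ℝ) :
    ∃ H : Ω → ℝ, Integrable H μ ∧ ∫ ω, H ω ∂μ ≤ A + 5 * (r * √n) * Real.exp (-lam / 2) ∧
      ∀ ω, ∀ x : ℕ → ℝ, lam * ∑ b ∈ range n, |x b| ≤ A → ∑ b ∈ range n, x b ^ 2 ≤ r ^ 2 →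
        ∑ b ∈ range n, x b * X b ω ≤ H ω := by
  have hn' : (0 : ℝ) < √n := by positivity
  set e := Real.exp (-lam / 2) with he
  have he0 : 0 < e := Real.exp_pos _
  have hee : Real.exp (-lam) = e ^ 2 := by
    rw [he, ← Real.exp_nat_mul]
    congr 1
    push_cast
    ring
  set al : ℝ := √n * e / r with hal
  have hal0 : 0 < al := by positivity
  have hint : Integrable (fun ω => ∑ b ∈ range n, (Real.exp (X b ω) + Real.exp (-X b ω))) μ :=
    integrable_finsetSum _ fun b _ => (hX b).1
  refine ⟨fun ω => (A + al / 2 * r ^ 2) + Real.exp (-lam) / al *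
    ∑ b ∈ range n, (Real.exp (X b ω) + Real.exp (-X b ω)),
    (integrable_const _).add (hint.const_mul _), ?_, ?_⟩
  · rw [integral_add (integrable_const _) (hint.const_mul _), integral_const_mul,
      integral_finsetSum _ fun b _ => (hX b).1]
    have h1 : ∑ b ∈ range n, ∫ ω, (Real.exp (X b ω) + Real.exp (-X b ω)) ∂μ ≤ n * 4 := by
      refine (sum_le_sum fun b _ => (hX b).2).trans ?_
      simp
    have h2 : Real.exp (-lam) / al * (n * 4) = 4 * (r * √n) * e := by
      have h3 : (n : ℝ) = √n ^ 2 := (Real.sq_sqrt (by positivity)).symm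
      rw [hee, hal]
      field_simp
      linarith
    have h4 : al / 2 * r ^ 2 = r * √n * e / 2 := by
      rw [hal]
      field_simp
    have h5 := mul_le_mul_of_nonneg_left h1
      (by positivity : 0 ≤ Real.exp (-lam) / al)
    have h6 : 0 < r * √n * e := by positivity
    simp only [integral_const, probReal_univ, smul_eq_mul, one_mul]
    linarith
  · intro ω x h1 h2
    calc ∑ b ∈ range n, x b * X b ω
        ≤ ∑ b ∈ range n, (lam * |x b| + al / 2 * x b ^ 2 +
          Real.exp (-lam) / al * (Real.exp (X b ω) + Real.exp (-X b ω))) :=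
          sum_le_sum fun b _ => mul_le_threshold _ _ hal0
      _ = lam * ∑ b ∈ range n, |x b| + al / 2 * ∑ b ∈ range n, x b ^ 2 +
          Real.exp (-lam) / al * ∑ b ∈ range n, (Real.exp (X b ω) + Real.exp (-X b ω)) := by
          rw [sum_add_distrib, sum_add_distrib, mul_sum, mul_sum, mul_sum]
      _ ≤ _ := add_le_add (add_le_add h1 (mul_le_mul_of_nonneg_left h2 (by positivity))) le_rfl

/-- The multiscale bound obtained from `J` steps of the Haar transform. -/
lemma integral_sSup_le_haar {p : ℕ} {ρ r : ℝ} (hr : 0 < r) (hρ : 0 < ρ) (J m : ℕ) (hm : 0 < m)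
    (hp : p ≤ 2 ^ J * m) (lam : ℕ → ℝ) (hlam : ∀ j, 0 ≤ lam j) :
    (∫ g : Fin p → ℝ, sSup ((fun t : Fin p → ℝ => dotProd g t) ''
        {t : Fin p → ℝ | tvNorm t ≤ ρ ∧ euclNorm t ≤ r})
        ∂(Measure.pi fun _ : Fin p => gaussianReal 0 1)) ≤
      5 * (r * √m) + ∑ j ∈ range J, (lam j * (√2 ^ j * (2 * ρ)) +
        5 * (r * √((2 ^ (J - 1 - j) * m : ℕ) : ℝ)) * Real.exp (-lam j / 2)) := by
  obtain ⟨H₀, hi₀, hb₀, hs₀⟩ := exists_integrable_bound_l1_inter_l2 _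
    (fun b => expMomentsLeTwo_haarLow (p := p) J b) hm hr 0 0
  choose H hi hb hs using fun j => exists_integrable_bound_l1_inter_l2 _
    (fun b => expMomentsLeTwo_haarHigh (p := p) j b)
    (by positivity : 0 < 2 ^ (J - 1 - j) * m) hr (lam j) (lam j * (√2 ^ j * (2 * ρ)))
  have hint : Integrable (fun g => H₀ g + ∑ j ∈ range J, H j g)
      (Measure.pi fun _ : Fin p => gaussianReal 0 1) :=
    hi₀.add (integrable_finsetSum _ fun j _ => hi j)
  have hle : ∀ g t : Fin p → ℝ, tvNorm t ≤ ρ → euclNorm t ≤ r →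
      dotProd g t ≤ H₀ g + ∑ j ∈ range J, H j g := by
    intro g t ht1 ht2
    have htv : ∀ n, ∑ i ∈ range n, |zeroExtend t (i + 1) - zeroExtend t i| ≤ 2 * ρ := fun n =>
      (sum_abs_sub_zeroExtend_le t n).trans (by linarith)
    have hsq := sum_sq_zeroExtend_le hr.le ht2
    have h1 : dotProd g t = ∑ i ∈ range (2 ^ J * m), zeroExtend t i * zeroExtend g i := by
      rw [sum_range_zeroExtend hp _ fun i hi => by rw [zeroExtend_of_le t hi, zero_mul]]
      exact sum_congr rfl fun i _ => by rw [zeroExtend_val, zeroExtend_val, mul_comm]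
    rw [h1, sum_mul_eq_haar_iterate]
    refine add_le_add (hs₀ g _ (by simp) (sum_sq_haarLow_iterate_le hsq J m))
      (sum_le_sum fun j _ => hs j g _ ?_ (sum_sq_haarHigh_iterate_le hsq j _))
    exact mul_le_mul_of_nonneg_left (sum_abs_haarHigh_iterate_le htv j _) (hlam j)
  have hzero : tvNorm (0 : Fin p → ℝ) ≤ ρ ∧ euclNorm (0 : Fin p → ℝ) ≤ r := by
    constructor
    · simp [tvNorm, discreteDiff, hρ.le]
    · simp [euclNorm, hr.le]
  refine (integral_mono_of_nonneg (Filter.Eventually.of_forall fun g => ?_) hint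
    (Filter.Eventually.of_forall fun g => ?_)).trans ?_
  · refine le_csSup ⟨H₀ g + ∑ j ∈ range J, H j g, ?_⟩ ⟨0, hzero, by simp [dotProd]⟩
    rintro _ ⟨t, ⟨h1, h2⟩, rfl⟩
    exact hle g t h1 h2
  · refine csSup_le ⟨_, ⟨0, hzero, rfl⟩⟩ ?_
    rintro _ ⟨t, ⟨h1, h2⟩, rfl⟩
    exact hle g t h1 h2
  · rw [integral_add hi₀ (integrable_finsetSum _ fun j _ => hi j),
      integral_finsetSum _ fun j _ => hi j]
    refine add_le_add (by simpa using hb₀) (sum_le_sum fun j _ => hb j)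

lemma sqrt_two_bounds : (1.4 : ℝ) ≤ √2 ∧ (√2 : ℝ) ≤ 1.5 :=
  ⟨Real.le_sqrt_of_sq_le (by norm_num), Real.sqrt_le_iff.mpr (by norm_num)⟩

lemma nat_div_sqrt_two_pow_le (k : ℕ) : (k : ℝ) / √2 ^ k ≤ 5 * (6 / 7) ^ k := by
  have h1 : (k : ℝ) ≤ 5 * (6 / 5) ^ k := by
    have := one_add_mul_le_pow (a := (1 / 5 : ℝ)) (by norm_num) k
    norm_num at this
    linarith
  have h2 : (1.4 : ℝ) ^ k ≤ √2 ^ k := pow_le_pow_left₀ (by norm_num) sqrt_two_bounds.1 k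
  rw [div_le_iff₀ (by positivity)]
  calc (k : ℝ) ≤ 5 * (6 / 5) ^ k := h1
    _ = 5 * (6 / 7) ^ k * 1.4 ^ k := by
      rw [mul_assoc, ← mul_pow]
      norm_num
    _ ≤ _ := by gcongr

lemma sqrt_two_pow_mul_exp_neg_le (k : ℕ) : √2 ^ k * Real.exp (-k) ≤ (6 / 7 : ℝ) ^ k := by
  have h : Real.exp (-(k : ℝ)) = (Real.exp (-1)) ^ k := by
    rw [← Real.exp_nat_mul]
    congr 1
    ring
  rw [h, ← mul_pow]
  refine pow_le_pow_left₀ (by positivity) ?_ k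
  rw [Real.exp_neg, ← div_eq_mul_inv, div_le_iff₀ (Real.exp_pos 1)]
  linarith [Real.exp_one_gt_d9, sqrt_two_bounds.2]

lemma sum_geometric_reflect_le (J : ℕ) : ∑ j ∈ range J, (6 / 7 : ℝ) ^ (J - j) ≤ 7 := by
  suffices h : ∑ j ∈ range J, (6 / 7 : ℝ) ^ (J - j) ≤ 6 by linarith
  induction J with
  | zero => simp
  | succ J ih =>
    rw [sum_range_succ]
    have : ∑ j ∈ range J, (6 / 7 : ℝ) ^ (J + 1 - j) =
        6 / 7 * ∑ j ∈ range J, (6 / 7 : ℝ) ^ (J - j) := by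
      rw [mul_sum]
      refine sum_congr rfl fun j hj => ?_
      rw [Nat.succ_sub (mem_range.mp hj).le, pow_succ']
    rw [this, Nat.add_sub_cancel_left]
    linarith

/-- The number of Haar steps that balances the coarse part against the details. -/
lemma exists_dyadic_scale {p : ℕ} (hp : 1 ≤ p) {ρ r : ℝ} (hr : 0 < r) (hrρ : r ≤ ρ) :
    ∃ J : ℕ, r * √p ≤ 2 * ρ * 2 ^ J ∧ (0 < J → ρ * 2 ^ J ≤ r * √p) ∧ 2 ^ J ≤ p := by
  have hρ : 0 < ρ := hr.trans_le hrρ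
  rcases lt_or_ge (r * √p / ρ) 1 with h | h
  · refine ⟨0, ?_, by simp, by simpa using hp⟩
    rw [div_lt_one hρ] at h
    simp only [pow_zero]
    linarith
  · obtain ⟨J, h1, h2⟩ := exists_nat_pow_near h (one_lt_two : (1 : ℝ) < 2)
    rw [div_lt_iff₀ hρ] at h2
    rw [le_div_iff₀ hρ] at h1
    refine ⟨J, ?_, fun _ => by linarith, ?_⟩
    · rw [pow_succ] at h2
      linarith
    · have h3 : ρ * 2 ^ J ≤ ρ * √p := by
        have := mul_le_mul_of_nonneg_right hrρ (Real.sqrt_nonneg p)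
        linarith
      have h4 : (2 : ℝ) ^ J ≤ √p := le_of_mul_le_mul_left h3 hρ
      have h5 : √(p : ℝ) ≤ p :=
        Real.sqrt_le_iff.mpr ⟨by positivity, by
          have : (1 : ℝ) ≤ p := by exact_mod_cast hp
          nlinarith⟩
      exact_mod_cast h4.trans h5

/-- Gaussian mean width of the intersection of a total-variation ball with a
Euclidean ball (Lemma 4): `w(ρ B_TV ∩ r B₂) ≤ c √(rρ) p^{1/4}`. -/
theorem gaussian_mean_width_tv_ball_inter_euclidean_ball :
    ∃ c : ℝ, 0 < c ∧ ∀ p : ℕ, 1 ≤ p → ∀ ρ r : ℝ, 0 < r → r ≤ ρ →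
      (∫ g : Fin p → ℝ,
          sSup ((fun t : Fin p → ℝ => dotProd g t) ''
            {t : Fin p → ℝ | tvNorm t ≤ ρ ∧ euclNorm t ≤ r})
          ∂(Measure.pi fun _ : Fin p => ProbabilityTheory.gaussianReal 0 1)) ≤
        c * Real.sqrt (r * ρ) * (p : ℝ) ^ ((1 : ℝ) / 4) := by
  refine ⟨220, by norm_num, fun p hp ρ r hr hrρ => ?_⟩
  have hρ : 0 < ρ := hr.trans_le hrρ
  have hp0 : (0 : ℝ) < p := by exact_mod_cast hp
  obtain ⟨J, hJ1, hJ2, hJ3⟩ := exists_dyadic_scale hp hr hrρ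
  set T : ℝ := √(r * ρ) * (p : ℝ) ^ ((1 : ℝ) / 4) with hT
  have hT0 : 0 ≤ T := by positivity
  have hTsq : T ^ 2 = r * ρ * √p := by
    rw [hT, mul_pow, Real.sq_sqrt (by positivity), Real.sqrt_eq_rpow, ← Real.rpow_natCast,
      ← Real.rpow_mul hp0.le]
    norm_num
  have hpp : √(p : ℝ) ^ 2 = p := Real.sq_sqrt hp0.le
  have hsp : 0 < √(p : ℝ) := by positivity
  have hs2 : (√2 : ℝ) ^ 2 = 2 := Real.sq_sqrt (by norm_num)
  have hpow : ∀ k : ℕ, ((√2 : ℝ) ^ k) ^ 2 = 2 ^ k := fun k => by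
    rw [← pow_mul, mul_comm, pow_mul, hs2]
  set m : ℕ := p / 2 ^ J + 1 with hm
  have hm1 : p ≤ 2 ^ J * m := (Nat.lt_mul_div_succ p (by positivity)).le
  have hm2 : (2 : ℝ) ^ J * m ≤ 2 * p := by
    have : 2 ^ J * m ≤ 2 * p := by
      rw [hm, mul_add, mul_one]
      have := Nat.mul_div_le p (2 ^ J)
      omega
    exact_mod_cast this
  have hmr : r ^ 2 * m ≤ 4 * T ^ 2 := by
    have h1 : (r ^ 2 * m) * 2 ^ J ≤ (4 * T ^ 2) * 2 ^ J := by
      calc (r ^ 2 * m) * 2 ^ J = r ^ 2 * (2 ^ J * m) := by ring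
        _ ≤ r ^ 2 * (2 * p) := by gcongr
        _ = 2 * (r * √p) * (r * √p) := by
          rw [← hpp]
          simp only [Real.sqrt_sq hsp.le]
          ring
        _ ≤ 2 * (r * √p) * (2 * ρ * 2 ^ J) := by gcongr
        _ = _ := by
          rw [hTsq]
          ring
    exact le_of_mul_le_mul_right h1 (by positivity)
  refine (integral_sSup_le_haar hr hρ J m (Nat.succ_pos _) hm1 (fun j => 2 * ((J - j : ℕ) : ℝ))
    fun j => by positivity).trans ?_
  have hmain : r * √m ≤ 2 * T := by
    refine abs_le_of_sq_le_sq' ?_ (by positivity) |>.2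
    rw [mul_pow, Real.sq_sqrt (by positivity)]
    linarith
  have hdet : ∀ j ∈ range J, 2 * ((J - j : ℕ) : ℝ) * (√2 ^ j * (2 * ρ)) +
      5 * (r * √((2 ^ (J - 1 - j) * m : ℕ) : ℝ)) * Real.exp (-(2 * ((J - j : ℕ) : ℝ)) / 2) ≤
      30 * T * (6 / 7) ^ (J - j) := by
    intro j hj
    have hj := mem_range.mp hj
    obtain ⟨k, rfl⟩ : ∃ k, J = j + k := ⟨J - j, by omega⟩
    have hk : 0 < k := by omega
    rw [Nat.add_sub_cancel_left]
    have h1 : ρ * √2 ^ (j + k) ≤ T := by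
      refine abs_le_of_sq_le_sq' ?_ hT0 |>.2
      rw [mul_pow, hpow, hTsq]
      nlinarith [hJ2 (by omega)]
    have h2 : 2 * (k : ℝ) * (√2 ^ j * (2 * ρ)) ≤ 20 * T * (6 / 7) ^ k := by
      have h3 : 2 * (k : ℝ) * (√2 ^ j * (2 * ρ)) =
          4 * (k / √2 ^ k) * (ρ * √2 ^ (j + k)) := by
        rw [pow_add]
        field_simp
        ring
      rw [h3]
      calc 4 * (k / √2 ^ k) * (ρ * √2 ^ (j + k)) ≤ 4 * (5 * (6 / 7) ^ k) * T := by
            gcongr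
            exact nat_div_sqrt_two_pow_le k
        _ = _ := by ring
    have h4 : r * √((2 ^ (j + k - 1 - j) * m : ℕ) : ℝ) ≤ 2 * T * √2 ^ k := by
      refine abs_le_of_sq_le_sq' ?_ (by positivity) |>.2
      rw [mul_pow, Real.sq_sqrt (by positivity), mul_pow, mul_pow, hpow]
      push_cast
      have h5 : (2 : ℝ) ^ (j + k - 1 - j) ≤ 2 ^ k :=
        pow_le_pow_right₀ (by norm_num) (by omega)
      calc r ^ 2 * (2 ^ (j + k - 1 - j) * m) = (r ^ 2 * m) * 2 ^ (j + k - 1 - j) := by ring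
        _ ≤ (4 * T ^ 2) * 2 ^ k := by gcongr
        _ = _ := by ring
    have h6 : 5 * (r * √((2 ^ (j + k - 1 - j) * m : ℕ) : ℝ)) *
        Real.exp (-(2 * (k : ℝ)) / 2) ≤ 10 * T * (6 / 7) ^ k := by
      rw [show -(2 * (k : ℝ)) / 2 = -k by ring]
      calc _ ≤ 5 * (2 * T * √2 ^ k) * Real.exp (-k) := by gcongr
        _ = 10 * T * (√2 ^ k * Real.exp (-k)) := by ring
        _ ≤ _ := by
          gcongr
          exact sqrt_two_pow_mul_exp_neg_le k
    linarith
  have hsum := sum_le_sum hdet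
  rw [← mul_sum] at hsum
  have := mul_le_mul_of_nonneg_left (sum_geometric_reflect_le J)
    (by positivity : 0 ≤ 30 * T)
  rw [mul_assoc, ← hT]
  linarith
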